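/- arXiv:2211.07736 — 3 statements merged into one kernel-verified Lean document; each statement's English description precedes it below -/
import Mathlib

section
/- Let X be a complex Banach space and let T, S be bounded linear operators on X with TS = ST. If acc σ(T) ⊆ {0} and acc σ(S) ⊆ {0}, then acc σ(TS) ⊆ {0}. -/
open Ordinal Set

/-- The `α`-th Cantor–Bendixson derivative of a set `A ⊆ ℂ`, defined by transfinite
recursion: `cbd A 0 = A`, `cbd A (β+1) = derivedSet (cbd A β)` (the set of accumulation
points of `cbd A β`), and `cbd A α = ⋂_{β < α} cbd A β` for limit ordinals `α`. -/
noncomputable def cbd (A : Set ℂ) (α : Ordinal) : Set ℂ :=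
  Ordinal.limitRecOn α A (fun _ ih => derivedSet ih)
    (fun α _ ih => ⋂ (β : Set.Iio α), ih β.1 β.2)

variable {X : Type*} [NormedAddCommGroup X] [NormedSpace ℂ X] [CompleteSpace X]

/-- The restriction `T_M` of a bounded operator `T` to a `T`-invariant subspace `M`. -/
noncomputable def restr (T : X →L[ℂ] X) (M : Submodule ℂ X)
    (hM : ∀ x ∈ M, T x ∈ M) : M →L[ℂ] M :=
  { toLinearMap := T.toLinearMap.restrict hM
    cont := (T.continuous.comp continuous_subtype_val).subtype_mk _ }

theorem spec_mul_aux {A : Type*} [NormedRing A] [NormedAlgebra ℂ A] [CompleteSpace A]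
    (t s : A) (hc : t * s = s * t) (z : ℂ) (hz : z ∈ spectrum ℂ (t * s)) :
    ∃ a ∈ spectrum ℂ t, ∃ b ∈ spectrum ℂ s, a * b = z := by
  let D : Set A := Set.centralizer {t, s}
  let C : Subalgebra ℂ A := Subalgebra.centralizer ℂ D
  have hmem : ∀ x ∈ ({t, s} : Set A), x ∈ C := fun x hx =>
    Set.subset_centralizer_centralizer hx
  have hsub : ∀ x ∈ ({t, s} : Set A), x ∈ D := by
    intro x hx
    rw [Set.mem_centralizer_iff]
    intro m hm
    simp only [Set.mem_insert_iff, Set.mem_singleton_iff] at hx hm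
    rcases hx with rfl | rfl <;> rcases hm with rfl | rfl <;> simp [hc]
  have hCD : ∀ x ∈ C, x ∈ D := by
    intro x hx
    rw [Set.mem_centralizer_iff]
    intro m hm
    exact Subalgebra.mem_centralizer_iff ℂ |>.1 hx m (hsub m hm)
  have hcomm : ∀ x y : C, x * y = y * x := by
    intro x y
    apply Subtype.ext
    exact Subalgebra.mem_centralizer_iff ℂ |>.1 y.2 x.1 (hCD _ x.2)
  have hclosed : IsClosed (C : Set A) := Set.isClosed_centralizer D
  have : CompleteSpace C := hclosed.completeSpace_coe
  let : NormedCommRing C := { (inferInstance : NormedRing C) with mul_comm := hcomm }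
  have hspec : ∀ (x : C) (w : ℂ), w ∈ spectrum ℂ x → w ∈ spectrum ℂ (x : A) := by
    intro x w hw hu
    apply hw
    have hu' : IsUnit ((algebraMap ℂ C w - x : C) : A) := hu
    obtain ⟨u, hu⟩ := hu'
    have hinv : (↑u⁻¹ : A) ∈ C := by
      rw [Subalgebra.mem_centralizer_iff]
      intro g hg
      have h1 : g * (u : A) = u * g := by
        rw [hu]
        exact Subalgebra.mem_centralizer_iff ℂ |>.1 (algebraMap ℂ C w - x : C).2 g hg
      exact (Commute.units_inv_right (show Commute g (u : A) from h1)).eq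
    refine IsUnit.of_mul_eq_one (⟨_, hinv⟩ : C) ?_
    apply Subtype.ext
    change ((algebraMap ℂ C w - x : C) : A) * (↑u⁻¹ : A) = 1
    rw [← hu]
    simp
  let t' : C := ⟨t, hmem t (by simp)⟩
  let s' : C := ⟨s, hmem s (by simp)⟩
  have hz' : z ∈ spectrum ℂ (t' * s') := spectrum.subset_subalgebra (t' * s') hz
  obtain ⟨f, hf⟩ := WeakDual.CharacterSpace.mem_spectrum_iff_exists.1 hz'
  exact ⟨f t', hspec t' _ (WeakDual.CharacterSpace.mem_spectrum_iff_exists.2 ⟨f, rfl⟩),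
    f s', hspec s' _ (WeakDual.CharacterSpace.mem_spectrum_iff_exists.2 ⟨f, rfl⟩),
    by rw [← hf, map_mul]⟩

theorem ev_eq_aux {K : Set ℂ} (hK : derivedSet K ⊆ {0}) {a : ℂ} (ha : a ≠ 0) :
    ∀ᶠ y in nhds a, y ∈ K → y = a := by
  have h : ¬ AccPt a (Filter.principal K) := fun h => ha (hK h)
  rw [accPt_iff_frequently, Filter.not_frequently] at h
  filter_upwards [h] with y hy hyK
  by_contra hne
  exact hy ⟨hne, hyK⟩

/-- If two bounded operators on a complex Banach space commute and each is zeroloid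
(i.e. `acc σ(·) ⊆ {0}`), then their product is zeroloid. -/
theorem zeroloid_mul (T S : X →L[ℂ] X) (hc : T * S = S * T)
    (hT : derivedSet (spectrum ℂ T) ⊆ {0}) (hS : derivedSet (spectrum ℂ S) ⊆ {0}) :
    derivedSet (spectrum ℂ (T * S)) ⊆ {0} := by
  intro z hz
  by_contra hz0
  have hz0 : z ≠ 0 := hz0
  rw [mem_derivedSet, accPt_iff_frequently] at hz
  obtain ⟨u, hu, hu'⟩ := Filter.exists_seq_forall_of_frequently hz
  choose a ha b hb hab using fun n => spec_mul_aux T S hc (u n) (hu' n).2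
  obtain ⟨p, -, φ, hφ, hlim⟩ := ((spectrum.isCompact (𝕜 := ℂ) T).prod
    (spectrum.isCompact (𝕜 := ℂ) S)).tendsto_subseq (x := fun n => (a n, b n))
    (fun n => ⟨ha n, hb n⟩)
  have h1 : Filter.Tendsto (fun n => a (φ n)) Filter.atTop (nhds p.1) :=
    (continuous_fst.tendsto p).comp hlim
  have h2 : Filter.Tendsto (fun n => b (φ n)) Filter.atTop (nhds p.2) :=
    (continuous_snd.tendsto p).comp hlim
  have h3 : Filter.Tendsto (fun n => u (φ n)) Filter.atTop (nhds (p.1 * p.2)) := by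
    simpa only [hab] using h1.mul h2
  have h4 : p.1 * p.2 = z := tendsto_nhds_unique h3 (hu.comp hφ.tendsto_atTop)
  have hp1 : p.1 ≠ 0 := fun h => hz0 (by rw [← h4, h, zero_mul])
  have hp2 : p.2 ≠ 0 := fun h => hz0 (by rw [← h4, h, mul_zero])
  obtain ⟨n, hn1, hn2⟩ :=
    ((h1.eventually (ev_eq_aux hT hp1)).and (h2.eventually (ev_eq_aux hS hp2))).exists
  apply (hu' (φ n)).1
  rw [← hab, hn1 (ha _), hn2 (hb _), h4]
end

section
/- Let X be a complex Banach space and let T, S be bounded linear operators on X with TS = ST. If 0 ∈ acc σ(TS), then 0 ∈ acc σ(T) ∪ acc σ(S). -/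
open Ordinal Set

variable {X : Type*} [NormedAddCommGroup X] [NormedSpace ℂ X] [CompleteSpace X]

theorem exists_mul_of_mem_spectrum {B : Type*} [NormedRing B] [NormedAlgebra ℂ B]
    [CompleteSpace B] (T S : B) (hc : T * S = S * T) (μ : ℂ) (hμ : μ ∈ spectrum ℂ (T * S)) :
    ∃ a ∈ spectrum ℂ T, ∃ b ∈ spectrum ℂ S, a * b = μ := by
  let C : Set B := Set.centralizer {T, S}
  let A : Subalgebra ℂ B := Subalgebra.centralizer ℂ C
  have hTC : T ∈ C := by
    rintro m (rfl | rfl)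
    · rfl
    · exact hc.symm
  have hSC : S ∈ C := by
    rintro m (rfl | rfl)
    · exact hc
    · rfl
  have hTA : T ∈ A := fun g hg => (hg T (by simp)).symm
  have hSA : S ∈ A := fun g hg => (hg S (by simp)).symm
  have hAC : ∀ x ∈ A, x ∈ C := by
    rintro x hx m (rfl | rfl)
    · exact hx _ hTC
    · exact hx _ hSC
  have hcomm : ∀ x y : A, x * y = y * x := fun x y =>
    Subtype.ext (y.2 x.1 (hAC x.1 x.2))
  have hcl : IsClosed (A : Set B) := Set.isClosed_centralizer C
  let : NormedCommRing A := { (inferInstance : NormedRing A) with mul_comm := hcomm }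
  let : NormedAlgebra ℂ A := Subalgebra.toNormedAlgebra A
  have : CompleteSpace A := hcl.completeSpace_coe
  have hunit : ∀ x : A, IsUnit (x : B) → IsUnit x := by
    rintro x ⟨u, hu⟩
    have hinv : (↑u⁻¹ : B) ∈ A := by
      intro g hg
      have h : Commute g (u : B) := by
        rw [hu]; exact x.2 g hg
      exact h.units_inv_right
    refine IsUnit.of_mul_eq_one ⟨_, hinv⟩ (Subtype.ext ?_)
    change (x : B) * ↑u⁻¹ = 1
    rw [← hu]; simp
  let t : A := ⟨T, hTA⟩
  let s : A := ⟨S, hSA⟩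
  have hn : ¬ IsUnit (algebraMap ℂ A μ - t * s) := by
    intro h
    exact hμ (h.map A.val)
  obtain ⟨φ, hφ⟩ := WeakDual.CharacterSpace.exists_apply_eq_zero hn
  have key : ∀ x : A, φ x ∈ spectrum ℂ (x : B) := by
    intro x hx
    have h1 : IsUnit (algebraMap ℂ A (φ x) - x) := hunit _ hx
    exact AlgHom.apply_mem_spectrum φ x h1
  refine ⟨φ t, key t, φ s, key s, ?_⟩
  rw [map_sub, map_mul, AlgHomClass.commutes, sub_eq_zero] at hφ
  exact hφ.symm

theorem exists_lower_bound {s : Set ℂ} (h : (0 : ℂ) ∉ derivedSet s) :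
    ∃ ε > 0, ∀ z ∈ s, z ≠ 0 → ε ≤ ‖z‖ := by
  rw [mem_derivedSet, accPt_iff_nhds] at h
  push Not at h
  obtain ⟨U, hU, h⟩ := h
  obtain ⟨ε, hε, hb⟩ := Metric.mem_nhds_iff.1 hU
  refine ⟨ε, hε, fun z hz hz0 => ?_⟩
  by_contra! hlt
  exact hz0 (h z ⟨hb (by simpa using hlt), hz⟩)

/-- If `0` is an accumulation point of `σ(TS)` for commuting bounded operators `T, S`,
then `0` is an accumulation point of `σ(T)` or of `σ(S)`. -/
theorem zero_accPt_mul (T S : X →L[ℂ] X) (hc : T * S = S * T)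
    (h0 : (0 : ℂ) ∈ derivedSet (spectrum ℂ (T * S))) :
    (0 : ℂ) ∈ derivedSet (spectrum ℂ T) ∪ derivedSet (spectrum ℂ S) := by
  by_contra hcon
  rw [Set.mem_union, not_or] at hcon
  obtain ⟨ε, hε, h1⟩ := exists_lower_bound hcon.1
  obtain ⟨δ, hδ, h2⟩ := exists_lower_bound hcon.2
  rw [mem_derivedSet, accPt_iff_nhds] at h0
  obtain ⟨μ, ⟨hb, hμ⟩, hne⟩ := h0 _ (Metric.ball_mem_nhds 0 (mul_pos hε hδ))
  obtain ⟨a, ha, b, hbS, rfl⟩ := exists_mul_of_mem_spectrum T S hc μ hμ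
  have h3 := h1 a ha (left_ne_zero_of_mul hne)
  have h4 := h2 b hbS (right_ne_zero_of_mul hne)
  rw [mem_ball_zero_iff, norm_mul] at hb
  have := mul_le_mul h3 h4 hδ.le (norm_nonneg a)
  linarith
end

section
/- Let X be a complex Banach space, T a bounded linear operator on X, β an ordinal, and μ ∈ ℂ. Then μ ∉ acc^{β+1} σ(T) if and only if there exists (M, N) ∈ Red(T) such that (T − μI)_M is an invertible operator on M and acc^β σ((T − μI)_N) ⊆ {0}. -/
open Ordinal Set

variable {X : Type*} [NormedAddCommGroup X] [NormedSpace ℂ X] [CompleteSpace X]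

section BA
open Metric Complex
variable {A : Type*} [NormedRing A] [NormedAlgebra ℂ A] [CompleteSpace A]

theorem aux_mul_circle (b : A) (f : ℂ → A) (r : ℝ) (hr : 0 ≤ r) (hf : ContinuousOn f (sphere 0 r)) :
    b * (∮ z in C(0, r), f z) = ∮ z in C(0, r), b * f z := by
  have h := hf.circleIntegrable hr
  unfold circleIntegral
  have := (ContinuousLinearMap.mul ℂ A b).intervalIntegral_comp_comm h.out
  simp only [ContinuousLinearMap.mul_apply', mul_smul_comm] at this
  exact this.symm

theorem aux_circle_mul (b : A) (f : ℂ → A) (r : ℝ) (hr : 0 ≤ r) (hf : ContinuousOn f (sphere 0 r)) :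
    (∮ z in C(0, r), f z) * b = ∮ z in C(0, r), f z * b := by
  have h := hf.circleIntegrable hr
  unfold circleIntegral
  have := ((ContinuousLinearMap.mul ℂ A).flip b).intervalIntegral_comp_comm h.out
  simp only [ContinuousLinearMap.mul_apply', ContinuousLinearMap.flip_apply, smul_mul_assoc] at this
  exact this.symm

theorem aux_swap (f : ℂ → ℂ → A) (r s : ℝ) (hr : 0 ≤ r) (hs : 0 ≤ s)
    (hf : ContinuousOn (fun p : ℂ × ℂ => f p.1 p.2) (sphere 0 r ×ˢ sphere 0 s)) :
    (∮ w in C(0, s), ∮ z in C(0, r), f z w) = ∮ z in C(0, r), ∮ w in C(0, s), f z w := by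
  have h1 : Continuous (fun p : ℝ × ℝ => f (circleMap 0 r p.2) (circleMap 0 s p.1)) := by
    have := hf.comp_continuous (f := fun p : ℝ × ℝ => (circleMap 0 r p.2, circleMap 0 s p.1))
      (by fun_prop) (fun p => ⟨circleMap_mem_sphere _ hr _, circleMap_mem_sphere _ hs _⟩)
    exact this
  simp only [circleIntegral, ← intervalIntegral.integral_smul]
  rw [MeasureTheory.intervalIntegral_intervalIntegral_swap]
  · refine intervalIntegral.integral_congr fun x _ => intervalIntegral.integral_congr fun y _ => ?_
    exact smul_comm _ _ _
  · refine MeasureTheory.IntegrableOn.mono_set ?_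
      (Set.prod_mono uIoc_subset_uIcc uIoc_subset_uIcc)
    apply ContinuousOn.integrableOn_compact (isCompact_uIcc.prod isCompact_uIcc)
    apply Continuous.continuousOn
    simp only [deriv_circleMap]
    have h2 : Continuous (fun p : ℝ × ℝ => (circleMap 0 s p.1 * I)) := by fun_prop
    have h3 : Continuous (fun p : ℝ × ℝ => (circleMap 0 r p.2 * I)) := by fun_prop
    exact h2.smul (h3.smul h1)

theorem aux_cont {a : A} {s : Set ℂ} (h : ∀ z ∈ s, z ∉ spectrum ℂ a) :
    ContinuousOn (resolvent a) s := fun z hz =>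
  (spectrum.hasDerivAt_resolvent_const_left (𝕜 := ℂ)
    (by simpa [spectrum] using h z hz)).continuousAt.continuousWithinAt

theorem aux_mul_res {a : A} {z : ℂ} (h : z ∉ spectrum ℂ a) :
    (algebraMap ℂ A z - a) * resolvent a z = 1 :=
  Ring.mul_inverse_cancel _ (by simpa [spectrum.mem_iff] using h)

theorem aux_res_mul {a : A} {z : ℂ} (h : z ∉ spectrum ℂ a) :
    resolvent a z * (algebraMap ℂ A z - a) = 1 :=
  Ring.inverse_mul_cancel _ (by simpa [spectrum.mem_iff] using h)

theorem aux_comm_res {a b : A} (hb : Commute b a) {z : ℂ} (h : z ∉ spectrum ℂ a) :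
    b * resolvent a z = resolvent a z * b := by
  have h1 := aux_mul_res h
  have h2 := aux_res_mul h
  have hc : b * (algebraMap ℂ A z - a) = (algebraMap ℂ A z - a) * b := by
    rw [_root_.mul_sub, _root_.sub_mul, hb.eq, Algebra.commutes]
  calc b * resolvent a z = resolvent a z * ((algebraMap ℂ A z - a) * b) * resolvent a z := by
        rw [← mul_assoc, h2, one_mul]
    _ = resolvent a z * b * ((algebraMap ℂ A z - a) * resolvent a z) := by
        rw [← hc]; simp only [mul_assoc]
    _ = _ := by rw [h1, mul_one]

theorem aux_resolvent_id {a : A} {z w : ℂ} (hz : z ∉ spectrum ℂ a) (hw : w ∉ spectrum ℂ a) 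
    (hzw : w ≠ z) :
    resolvent a w * resolvent a z = (w - z)⁻¹ • resolvent a z - (w - z)⁻¹ • resolvent a w := by
  have : (w - z) • (resolvent a w * resolvent a z) = resolvent a z - resolvent a w := by
    calc _ = resolvent a w * ((algebraMap ℂ A w - a) - (algebraMap ℂ A z - a)) * resolvent a z := by
          rw [sub_sub_sub_cancel_right, ← map_sub, ← Algebra.commutes, mul_assoc, Algebra.smul_def]
      _ = _ := by
        rw [_root_.mul_sub, _root_.sub_mul, aux_res_mul hw, mul_assoc, aux_mul_res hz, one_mul, mul_one]
  rw [← smul_sub, ← this, inv_smul_smul₀ (sub_ne_zero.2 hzw)]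

theorem aux_int_out {r : ℝ} (hr : 0 ≤ r) {l : ℂ} (hl : r < ‖l‖) :
    (∮ z in C(0, r), (l - z)⁻¹) = 0 := by
  have hne : ∀ z ∈ closedBall (0:ℂ) r, l - z ≠ 0 := by
    intro z hz h
    rw [sub_eq_zero] at h
    subst h
    simp at hz
    linarith
  apply circleIntegral_eq_zero_of_differentiable_on_off_countable hr countable_empty
  · exact (continuousOn_const.sub continuousOn_id).inv₀ hne
  · intro z hz
    exact ((differentiableAt_const _).sub differentiableAt_id).inv (hne z (ball_subset_closedBall hz.1))

/-- The annulus just outside the circle avoids the spectrum. -/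
theorem aux_annulus {a : A} {r : ℝ} (h : ∀ z ∈ sphere (0:ℂ) r, z ∉ spectrum ℂ a) :
    ∃ s, r < s ∧ ∀ z ∈ closedBall (0:ℂ) s \ ball 0 r, z ∉ spectrum ℂ a := by
  have hK : IsCompact (norm '' (spectrum ℂ a \ ball 0 r)) :=
    ((spectrum.isCompact a).diff isOpen_ball).image continuous_norm
  have hr : r ∈ (norm '' (spectrum ℂ a \ ball 0 r))ᶜ := by
    rintro ⟨z, ⟨hz, -⟩, hzr⟩
    exact h z (by simpa using hzr) hz
  obtain ⟨e, he, hb⟩ := Metric.isOpen_iff.1 hK.isClosed.isOpen_compl r hr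
  refine ⟨r + e/2, by linarith, fun z hz hzs => ?_⟩
  have h1 : ‖z‖ ≤ r + e/2 := by simpa using hz.1
  have h2 : r ≤ ‖z‖ := by simpa using hz.2
  exact hb (a := ‖z‖) (by rw [mem_ball, Real.dist_eq, abs_lt]; constructor <;> linarith) ⟨z, ⟨hzs, hz.2⟩, rfl⟩

theorem aux_riesz (a : A) (r : ℝ) (hr : 0 < r) (h : ∀ z ∈ sphere (0:ℂ) r, z ∉ spectrum ℂ a) :
    ∃ p : A, p * p = p ∧ (∀ b, Commute b a → Commute b p) ∧
      (∃ q, Commute q a ∧ a * q = 1 - p) ∧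
      ∀ l : ℂ, r < ‖l‖ → ∃ s, Commute s a ∧ (algebraMap ℂ A l - a) * s = p := by
  have hc : (2 * Real.pi * I : ℂ) ≠ 0 := by simp [Real.pi_ne_zero, I_ne_zero]
  have hcont := aux_cont h
  have hcomm : ∀ g : ℂ → ℂ, ContinuousOn g (sphere 0 r) → ∀ b, Commute b a →
      Commute b ((2 * Real.pi * I : ℂ)⁻¹ • ∮ z in C(0, r), g z • resolvent a z) := by
    intro g hg b hb
    apply Commute.smul_right
    rw [Commute, SemiconjBy, aux_mul_circle b (fun z => g z • resolvent a z) r hr.le (hg.smul hcont),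
      aux_circle_mul b (fun z => g z • resolvent a z) r hr.le (hg.smul hcont)]
    apply circleIntegral.integral_congr hr.le
    intro z hz
    simp only [mul_smul_comm, smul_mul_assoc, aux_comm_res hb (h z hz)]
  have hmul : ∀ g : ℂ → ℂ, ContinuousOn g (sphere 0 r) → ∀ l : ℂ, 
      (algebraMap ℂ A l - a) * (∮ z in C(0, r), g z • resolvent a z) = 
      (∮ z in C(0, r), ((l - z) * g z) • resolvent a z) + (∮ z in C(0, r), g z) • (1 : A) := by
    intro g hg l
    rw [aux_mul_circle _ (fun z => g z • resolvent a z) r hr.le (hg.smul hcont), ← circleIntegral.integral_smul_const,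
      ← circleIntegral.integral_add]
    · apply circleIntegral.integral_congr hr.le
      intro z hz
      have := aux_mul_res (h z hz)
      have e : algebraMap ℂ A l - a = algebraMap ℂ A (l - z) + (algebraMap ℂ A z - a) := by
        rw [map_sub]; abel
      simp only [mul_smul_comm]
      rw [e, add_mul, this, ← Algebra.smul_def, smul_add, smul_smul, mul_comm]
    · exact ContinuousOn.circleIntegrable hr.le (((continuousOn_const.sub continuousOn_id).mul hg).smul hcont)
    · exact ContinuousOn.circleIntegrable hr.le (hg.smul continuousOn_const)
  set c : ℂ := (2 * Real.pi * I : ℂ) with hcdef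
  have hz0 : ∀ z ∈ sphere (0:ℂ) r, z ≠ 0 := fun z hz h0 => by
    subst h0; simp at hz; linarith
  refine ⟨c⁻¹ • ∮ z in C(0, r), resolvent a z, ?_, ?_, ?_, ?_⟩
  · obtain ⟨s, hrs, hs⟩ := aux_annulus h
    have hs0 : 0 < s := hr.trans hrs
    have hsph : ∀ w ∈ sphere (0:ℂ) s, w ∉ spectrum ℂ a := fun w hw => hs w
      ⟨sphere_subset_closedBall hw, by
        simp only [mem_sphere, dist_zero_right, mem_ball] at *; linarith⟩
    have hrad : (∮ z in C(0, s), resolvent a z) = ∮ z in C(0, r), resolvent a z := by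
      apply circleIntegral_eq_of_differentiable_on_annulus_off_countable hr hrs.le countable_empty
      · exact aux_cont hs
      · intro z hz
        refine (spectrum.hasDerivAt_resolvent_const_left (𝕜 := ℂ) ?_).differentiableAt
        have := hs z ⟨ball_subset_closedBall hz.1.1, fun hh => hz.1.2 (ball_subset_closedBall hh)⟩
        simpa [spectrum] using this
    have hne : ∀ z ∈ sphere (0:ℂ) r, ∀ w ∈ sphere (0:ℂ) s, w - z ≠ 0 := by
      intro z hz w hw hh
      rw [sub_eq_zero] at hh
      subst hh
      simp only [mem_sphere, dist_zero_right] at *; linarith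
    have key : (∮ w in C(0, s), resolvent a w) * (∮ z in C(0, r), resolvent a z) =
        c • ∮ z in C(0, r), resolvent a z := by
      rw [aux_circle_mul _ _ s hs0.le (aux_cont hsph)]
      have e1 : ∀ w ∈ sphere (0:ℂ) s, resolvent a w * (∮ z in C(0, r), resolvent a z) =
          ∮ z in C(0, r), (w - z)⁻¹ • resolvent a z := by
        intro w hw
        have hi : ContinuousOn (fun z => (w - z)⁻¹) (sphere 0 r) :=
          (continuousOn_const.sub continuousOn_id).inv₀ fun z hz => hne z hz w hw
        rw [aux_mul_circle _ _ r hr.le hcont]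
        have : (∮ z in C(0, r), resolvent a w * resolvent a z) =
          ∮ z in C(0, r), ((w - z)⁻¹ • resolvent a z - (w - z)⁻¹ • resolvent a w) := by
          apply circleIntegral.integral_congr hr.le
          intro z hz
          exact aux_resolvent_id (h z hz) (hsph w hw) (sub_ne_zero.1 (hne z hz w hw))
        rw [this, circleIntegral.integral_sub, circleIntegral.integral_smul_const, aux_int_out hr.le,
          zero_smul, _root_.sub_zero]
        · simp only [mem_sphere, dist_zero_right] at hw; linarith
        · exact ContinuousOn.circleIntegrable hr.le (hi.smul hcont)
        · exact ContinuousOn.circleIntegrable hr.le (hi.smul continuousOn_const)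
      rw [circleIntegral.integral_congr hs0.le e1, aux_swap (fun z w => (w - z)⁻¹ • resolvent a z) r s hr.le hs0.le,
        ← circleIntegral.integral_smul]
      · apply circleIntegral.integral_congr hr.le
        intro z hz
        simp only
        rw [circleIntegral.integral_smul_const, circleIntegral.integral_sub_inv_of_mem_ball]
        simp only [mem_sphere, dist_zero_right, mem_ball] at *; linarith
      · apply ContinuousOn.smul
        · exact (continuousOn_snd.sub continuousOn_fst).inv₀ fun p hp => hne _ hp.1 _ hp.2
        · exact hcont.comp continuousOn_fst fun p hp => hp.1
    rw [hrad] at key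
    rw [smul_mul_smul_comm, key, smul_smul, mul_assoc, inv_mul_cancel₀ hc, mul_one]
  · intro b hb
    simpa using hcomm (fun _ => 1) continuousOn_const b hb
  · have hg : ContinuousOn (fun z : ℂ => -z⁻¹) (sphere 0 r) := (continuousOn_id.inv₀ hz0).neg
    refine ⟨c⁻¹ • ∮ z in C(0, r), (-z⁻¹) • resolvent a z, (hcomm _ hg a (Commute.refl a)).symm, ?_⟩
    have := hmul _ hg 0
    have e2 : (∮ z in C(0, r), ((0 - z) * -z⁻¹) • resolvent a z) = ∮ z in C(0, r), resolvent a z := by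
      apply circleIntegral.integral_congr hr.le
      intro z hz
      simp [hz0 z hz]
    have e3 : (∮ z in C(0, r), -z⁻¹) = -c := by
      have h1 := circleIntegral.integral_sub_center_inv (0:ℂ) hr.ne'
      have h2 := circleIntegral.integral_const_mul (-1) (fun z => (z - 0)⁻¹) 0 r
      rw [h1] at h2
      simpa using h2
    rw [e2, e3, map_zero, _root_.zero_sub, neg_mul] at this
    rw [mul_smul_comm, ← neg_neg (a * _), this]
    rw [neg_add, smul_add, neg_smul, neg_neg, inv_smul_smul₀ hc, smul_neg]
    abel
  · intro l hl
    have hne : ∀ z ∈ sphere (0:ℂ) r, l - z ≠ 0 := by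
      intro z hz hh
      rw [sub_eq_zero] at hh
      subst hh
      simp only [mem_sphere, dist_zero_right] at *; linarith
    have hg : ContinuousOn (fun z : ℂ => (l - z)⁻¹) (sphere 0 r) := 
      (continuousOn_const.sub continuousOn_id).inv₀ hne
    refine ⟨c⁻¹ • ∮ z in C(0, r), (l - z)⁻¹ • resolvent a z, (hcomm _ hg a (Commute.refl a)).symm, ?_⟩
    have := hmul _ hg l
    rw [aux_int_out hr.le hl, zero_smul, add_zero] at this
    rw [mul_smul_comm, this]
    congr 1
    apply circleIntegral.integral_congr hr.le
    intro z hz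
    simp [hne z hz]
end BA

section CB

theorem cbd_zero' (A : Set ℂ) : cbd A 0 = A := by
  unfold cbd; exact Ordinal.limitRecOn_zero _ _ _

theorem cbd_succ' (A : Set ℂ) (o : Ordinal) : cbd A (o + 1) = derivedSet (cbd A o) := by
  unfold cbd; rw [Ordinal.limitRecOn_add_one]

theorem cbd_limit' (A : Set ℂ) (o : Ordinal) (h : Order.IsSuccLimit o) :
    cbd A o = ⋂ b : Set.Iio o, cbd A b.1 := by
  unfold cbd; rw [Ordinal.limitRecOn_limit _ _ _ _ h]

theorem cbd_local {A B U : Set ℂ} (hU : IsOpen U) (h : A ∩ U ⊆ B) (o : Ordinal) :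
    cbd A o ∩ U ⊆ cbd B o := by
  induction o using Ordinal.limitRecOn with
  | zero => simpa only [cbd_zero'] using h
  | add_one o ih =>
    rw [cbd_succ', cbd_succ']
    rintro x ⟨hx, hxU⟩
    have := AccPt.nhds_inter hx (hU.mem_nhds hxU)
    exact this.mono (Filter.principal_mono.2 (by rwa [inter_comm]))
  | limit o ho ih =>
    rw [cbd_limit' _ _ ho, cbd_limit' _ _ ho]
    rintro x ⟨hx, hxU⟩
    rw [mem_iInter] at hx ⊢
    exact fun i => ih i.1 i.2 ⟨hx i, hxU⟩

theorem cbd_mono' {A B : Set ℂ} (h : A ⊆ B) (o : Ordinal) : cbd A o ⊆ cbd B o := by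
  simpa using cbd_local isOpen_univ (by simpa using h) o

theorem cbd_subset {A : Set ℂ} (hA : IsClosed A) (o : Ordinal) : cbd A o ⊆ A := by
  induction o using Ordinal.limitRecOn with
  | zero => rw [cbd_zero']
  | add_one o ih =>
    rw [cbd_succ']
    exact (derivedSet_mono _ _ ih).trans ((isClosed_iff_derivedSet_subset _).1 hA)
  | limit o ho ih =>
    rw [cbd_limit' _ _ ho]
    intro x hx
    rw [mem_iInter] at hx
    exact ih 0 ho.bot_lt (hx ⟨0, ho.bot_lt⟩)

theorem preperfect_subset_cbd {A D : Set ℂ} (hD : Preperfect D) (h : D ⊆ A) (o : Ordinal) :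
    D ⊆ cbd A o := by
  induction o using Ordinal.limitRecOn with
  | zero => rwa [cbd_zero']
  | add_one o ih =>
    rw [cbd_succ']
    exact (preperfect_iff_subset_derivedSet.1 hD).trans (derivedSet_mono _ _ ih)
  | limit o ho ih =>
    rw [cbd_limit' _ _ ho]
    exact subset_iInter fun i => ih i.1 i.2

theorem cbd_diff_countable {A : Set ℂ} (hA : IsClosed A) (o : Ordinal) :
    (A \ cbd A o).Countable := by
  obtain ⟨V, D, hV, hD, rfl⟩ := exists_countable_union_perfect_of_isClosed hA
  refine hV.mono ?_
  rintro x ⟨hx | hx, hn⟩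
  · exact hx
  · exact absurd (preperfect_subset_cbd hD.acc subset_union_right o hx) hn

theorem cbd_translate (A : Set ℂ) (m : ℂ) (o : Ordinal) (z : ℂ) :
    z ∈ cbd {w | w + m ∈ A} o ↔ z + m ∈ cbd A o := by
  induction o using Ordinal.limitRecOn generalizing z with
  | zero => simp [cbd_zero']
  | add_one o ih =>
    have e : cbd {w | w + m ∈ A} o = (Homeomorph.addRight m) ⁻¹' (cbd A o) := by
      ext z; simp [ih]
    rw [cbd_succ', cbd_succ', e, mem_derivedSet, mem_derivedSet, ← Filter.comap_principal]
    have := (Homeomorph.addRight m).isOpenEmbedding.accPt_comap_iff (x := z) (l := Filter.principal (cbd A o))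
    simpa using this
  | limit o ho ih =>
    rw [cbd_limit' _ _ ho, cbd_limit' _ _ ho]
    simp only [mem_iInter]
    exact forall_congr' fun i => ih i.1 i.2 z

theorem exists_circle {A : Set ℂ} (hA : IsClosed A) (o : Ordinal) (h : (0:ℂ) ∉ cbd A (o + 1)) :
    ∃ r : ℝ, 0 < r ∧ (∀ z ∈ Metric.sphere (0:ℂ) r, z ∉ A) ∧
      cbd A o ∩ Metric.closedBall 0 r ⊆ {0} := by
  rw [cbd_succ', mem_derivedSet, accPt_iff_nhds] at h
  push Not at h
  obtain ⟨U, hU, hUA⟩ := h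
  obtain ⟨e, he, heU⟩ := Metric.mem_nhds_iff.1 hU
  have hcount := (cbd_diff_countable hA o).image norm
  have : ¬ (Ioo 0 e ⊆ norm '' (A \ cbd A o)) := fun hs => by
    have := (hcount.mono hs)
    rw [← Cardinal.le_aleph0_iff_set_countable, Cardinal.mk_Ioo_real he] at this
    exact absurd Cardinal.aleph0_lt_continuum (not_lt.2 this)
  obtain ⟨r, hr, hrn⟩ := not_subset.1 this
  have hsub : ∀ z, ‖z‖ ≤ r → z ∈ cbd A o → z = 0 := fun z hz hzc => hUA z
    ⟨heU (by simpa using hz.trans_lt hr.2), hzc⟩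
  refine ⟨r, hr.1, fun z hz hzA => hrn ⟨z, ⟨hzA, fun hc => ?_⟩, by simpa using hz⟩, ?_⟩
  · have hz' : ‖z‖ = r := by simpa using hz
    have := hsub z hz'.le hc
    subst this
    simp at hz'
    exact hr.1.ne hz'
  · rintro z ⟨hz, hb⟩
    exact hsub z (by simpa using hb) hz
end CB

theorem isUnit_of_restrict (N : Submodule ℂ X) (B D : X →L[ℂ] X) (C : N →L[ℂ] N)
    (hC : ∀ x : N, (C x : X) = B x) (hD : ∀ x ∈ N, D x ∈ N)
    (h1 : ∀ x ∈ N, B (D x) = x) (h2 : ∀ x ∈ N, D (B x) = x) : IsUnit C := by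
  refine ⟨⟨C, restr D N hD, ?_, ?_⟩, rfl⟩
  · ext x
    have : ((C ((restr D N hD) x) : N) : X) = B (D x) := by rw [hC]; rfl
    simpa [this] using h1 x x.2
  · ext x
    have : (((restr D N hD) (C x) : N) : X) = D (B x) := by rw [← hC]; rfl
    simpa [this] using h2 x x.2

theorem spectrum_sub_smul (T : X →L[ℂ] X) (m : ℂ) :
    spectrum ℂ (T - m • (1 : X →L[ℂ] X)) = {w | w + m ∈ spectrum ℂ T} := by
  ext w
  simp only [spectrum.mem_iff, mem_setOf_eq]
  rw [show algebraMap ℂ (X →L[ℂ] X) w - (T - m • (1 : X →L[ℂ] X)) =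
    algebraMap ℂ (X →L[ℂ] X) (w + m) - T by
      rw [map_add, Algebra.algebraMap_eq_smul_one, Algebra.algebraMap_eq_smul_one]; abel]

theorem spectrum_subset_union (S : X →L[ℂ] X) (M N : Submodule ℂ X)
    (hMc : IsClosed (M : Set X)) (hNc : IsClosed (N : Set X)) (hMN : IsCompl M N)
    (SM : M →L[ℂ] M) (SN : N →L[ℂ] N) (hSM : ∀ x : M, (SM x : X) = S x)
    (hSN : ∀ x : N, (SN x : X) = S x) :
    spectrum ℂ S ⊆ spectrum ℂ SM ∪ spectrum ℂ SN := by
  haveI : CompleteSpace M := hMc.completeSpace_coe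
  haveI : CompleteSpace N := hNc.completeSpace_coe
  intro l hl
  by_contra hcon
  rw [mem_union, not_or] at hcon
  obtain ⟨h1, h2⟩ := hcon
  rw [spectrum.mem_iff, not_not, ContinuousLinearMap.isUnit_iff_bijective] at h1 h2
  rw [spectrum.mem_iff, ContinuousLinearMap.isUnit_iff_bijective] at hl
  have a0 : ∀ x : X, (algebraMap ℂ (X →L[ℂ] X) l - S) x = l • x - S x := fun x => by
    simp [Algebra.algebraMap_eq_smul_one]
  have a1 : ∀ x : M, (((algebraMap ℂ (M →L[ℂ] M) l - SM) x : M) : X) = l • (x : X) - S x :=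
    fun x => by simp [Algebra.algebraMap_eq_smul_one, hSM]
  have a2 : ∀ x : N, (((algebraMap ℂ (N →L[ℂ] N) l - SN) x : N) : X) = l • (x : X) - S x :=
    fun x => by simp [Algebra.algebraMap_eq_smul_one, hSN]
  apply hl
  constructor
  · rw [injective_iff_map_eq_zero]
    intro x hx
    obtain ⟨m, hm, n, hn, rfl⟩ := Submodule.mem_sup.1
      (hMN.sup_eq_top ▸ Submodule.mem_top : x ∈ M ⊔ N)
    have e : (((algebraMap ℂ (M →L[ℂ] M) l - SM) ⟨m, hm⟩ : M) : X) =
        - (((algebraMap ℂ (N →L[ℂ] N) l - SN) ⟨n, hn⟩ : N) : X) := by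
      rw [a1, a2, eq_neg_iff_add_eq_zero, ← hx, a0]
      simp only [smul_add, map_add]; abel
    have z1 : (((algebraMap ℂ (M →L[ℂ] M) l - SM) ⟨m, hm⟩ : M) : X) = 0 :=
      Submodule.disjoint_def.1 hMN.disjoint _ (Subtype.prop _)
        (e ▸ N.neg_mem (Subtype.prop _))
    have z2 : (((algebraMap ℂ (N →L[ℂ] N) l - SN) ⟨n, hn⟩ : N) : X) = 0 := by
      rw [z1] at e; exact neg_eq_zero.1 e.symm
    have m0 := (injective_iff_map_eq_zero _).1 h1.1 _ (Subtype.ext z1)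
    have n0 := (injective_iff_map_eq_zero _).1 h2.1 _ (Subtype.ext z2)
    have m0' : m = 0 := congrArg Subtype.val m0
    have n0' : n = 0 := congrArg Subtype.val n0
    rw [m0', n0', add_zero]
  · intro x
    obtain ⟨m, hm, n, hn, rfl⟩ := Submodule.mem_sup.1
      (hMN.sup_eq_top ▸ Submodule.mem_top : x ∈ M ⊔ N)
    obtain ⟨u, hu⟩ := h1.2 ⟨m, hm⟩
    obtain ⟨v, hv⟩ := h2.2 ⟨n, hn⟩
    refine ⟨u + v, ?_⟩
    have hu' := (a1 u).symm.trans (congrArg Subtype.val hu)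
    have hv' := (a2 v).symm.trans (congrArg Subtype.val hv)
    simp only at hu' hv'
    rw [map_add, a0, a0, hu', hv']

theorem exists_decomp (T : X →L[ℂ] X) (m : ℂ) (r : ℝ) (hr : 0 < r)
    (h : ∀ z ∈ Metric.sphere (0:ℂ) r, z ∉ spectrum ℂ (T - m • (1 : X →L[ℂ] X))) :
    ∃ (M N : Submodule ℂ X) (hM : ∀ x ∈ M, T x ∈ M) (hN : ∀ x ∈ N, T x ∈ N),
        IsClosed (M : Set X) ∧ IsClosed (N : Set X) ∧ IsCompl M N ∧
        IsUnit (restr T M hM - m • (1 : M →L[ℂ] M)) ∧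
        spectrum ℂ (restr T N hN - m • (1 : N →L[ℂ] N)) ⊆
          spectrum ℂ (T - m • (1 : X →L[ℂ] X)) ∩ Metric.closedBall 0 r := by
  obtain ⟨p, hpp, hpc, ⟨q, hqc, hq⟩, hs⟩ := aux_riesz (T - m • (1 : X →L[ℂ] X)) r hr h
  set S := T - m • (1 : X →L[ℂ] X) with hS
  have hp1 : ∀ x, p (p x) = p x := fun x => congrArg (fun f : X →L[ℂ] X => f x) hpp
  have hcomm : ∀ b : X →L[ℂ] X, Commute b S → ∀ x, p (b x) = b (p x) := fun b hb x =>
    (congrArg (fun f : X →L[ℂ] X => f x) (hpc b hb).eq).symm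
  have hTS : Commute T S := by
    rw [hS]
    exact (Commute.refl T).sub_right ((Commute.one_right T).smul_right m)
  have hmemM : ∀ x, x ∈ LinearMap.ker p.toLinearMap ↔ p x = 0 := fun x => LinearMap.mem_ker
  have hmemN : ∀ x, x ∈ LinearMap.ker (1 - p : X →L[ℂ] X).toLinearMap ↔ p x = x := fun x => by
    rw [LinearMap.mem_ker]
    change x - p x = 0 ↔ p x = x
    rw [sub_eq_zero, eq_comm]
  have hMinv : ∀ b : X →L[ℂ] X, Commute b S → ∀ x ∈ LinearMap.ker p.toLinearMap,
      b x ∈ LinearMap.ker p.toLinearMap := fun b hb x hx => by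
    rw [hmemM] at *; rw [hcomm b hb, hx, map_zero]
  have hNinv : ∀ b : X →L[ℂ] X, Commute b S →
      ∀ x ∈ LinearMap.ker (1 - p : X →L[ℂ] X).toLinearMap,
      b x ∈ LinearMap.ker (1 - p : X →L[ℂ] X).toLinearMap := fun b hb x hx => by
    rw [hmemN] at *; rw [hcomm b hb, hx]
  have hev : ∀ {f g : X →L[ℂ] X}, f = g → ∀ x, f x = g x := fun h x => by rw [h]
  refine ⟨LinearMap.ker p.toLinearMap, LinearMap.ker (1 - p : X →L[ℂ] X).toLinearMap,
    hMinv T hTS, hNinv T hTS, p.isClosed_ker, (1 - p : X →L[ℂ] X).isClosed_ker, ?_, ?_, ?_⟩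
  · constructor
    · rw [Submodule.disjoint_def]
      intro x hx hx'
      rw [hmemM] at hx; rw [hmemN] at hx'
      rw [← hx', hx]
    · rw [codisjoint_iff, Submodule.eq_top_iff']
      intro x
      rw [Submodule.mem_sup]
      refine ⟨x - p x, ?_, p x, ?_, by abel⟩
      · rw [hmemM, map_sub, hp1, _root_.sub_self]
      · rw [hmemN, hp1]
  · refine isUnit_of_restrict _ S q _ (fun x => rfl) (hMinv q hqc) ?_ ?_
    · intro x hx
      have := hev hq x
      rw [hmemM] at hx
      simpa [hx] using this
    · intro x hx
      have := hev (hqc.eq.trans hq) x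
      rw [hmemM] at hx
      simpa [hx] using this
  · intro l hl
    have hB : ∀ x : LinearMap.ker (1 - p : X →L[ℂ] X).toLinearMap,
        (((algebraMap ℂ (LinearMap.ker (1 - p : X →L[ℂ] X).toLinearMap →L[ℂ]
            LinearMap.ker (1 - p : X →L[ℂ] X).toLinearMap) l -
          (restr T _ (hNinv T hTS) - m • 1)) x : LinearMap.ker (1 - p : X →L[ℂ] X).toLinearMap) : X) = (algebraMap ℂ (X →L[ℂ] X) l - S) x :=
      fun x => by
        simp only [Algebra.algebraMap_eq_smul_one]; rfl
    have hcl : ∀ b : X →L[ℂ] X, Commute b S → Commute b (algebraMap ℂ (X →L[ℂ] X) l - S) :=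
      fun b hb => (Algebra.commute_algebraMap_right l b).sub_right hb
    constructor
    · by_contra hn
      refine hl (isUnit_of_restrict _ (algebraMap ℂ (X →L[ℂ] X) l - S) (resolvent S l) _ hB
        (hNinv _ (aux_comm_res (Commute.refl S) hn).symm) ?_ ?_)
      · intro x _; exact hev (aux_mul_res hn) x
      · intro x _; exact hev (aux_res_mul hn) x
    · by_contra hn
      have hlr : r < ‖l‖ := by simpa using hn
      obtain ⟨s, hsc, hsp⟩ := hs l hlr
      refine hl (isUnit_of_restrict _ (algebraMap ℂ (X →L[ℂ] X) l - S) s _ hB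
        (hNinv _ hsc) ?_ ?_)
      · intro x hx
        rw [hmemN] at hx
        exact (hev hsp x).trans hx
      · intro x hx
        rw [hmemN] at hx
        exact (hev ((hcl s hsc).eq.trans hsp) x).trans hx

/-- `μ ∉ acc^{β+1} σ(T)` iff there is `(M, N) ∈ Red T` such that `(T - μI)_M` is
invertible and `acc^β σ((T - μI)_N) ⊆ {0}`. -/
theorem gInv_iff_not_mem_cbd_succ (T : X →L[ℂ] X) (β : Ordinal) (μ : ℂ) :
    μ ∉ cbd (spectrum ℂ T) (β + 1) ↔
      ∃ (M N : Submodule ℂ X) (hM : ∀ x ∈ M, T x ∈ M) (hN : ∀ x ∈ N, T x ∈ N),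
        IsClosed (M : Set X) ∧ IsClosed (N : Set X) ∧ IsCompl M N ∧
        IsUnit (restr T M hM - μ • (1 : M →L[ℂ] M)) ∧
        cbd (spectrum ℂ (restr T N hN - μ • (1 : N →L[ℂ] N))) β ⊆ {0} := by
  constructor
  · intro h
    have h0 : (0:ℂ) ∉ cbd (spectrum ℂ (T - μ • (1 : X →L[ℂ] X))) (β + 1) := by
      rw [spectrum_sub_smul, cbd_translate, zero_add]
      exact h
    obtain ⟨r, hr, hsph, hsub⟩ := exists_circle (spectrum.isClosed _) β h0
    obtain ⟨M, N, hM, hN, hMc, hNc, hMN, hu, hsp⟩ := exists_decomp T μ r hr hsph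
    refine ⟨M, N, hM, hN, hMc, hNc, hMN, hu, fun z hz => hsub ⟨?_, ?_⟩⟩
    · exact cbd_mono' (hsp.trans inter_subset_left) β hz
    · exact cbd_subset Metric.isClosed_closedBall β (cbd_mono' (hsp.trans inter_subset_right) β hz)
  · rintro ⟨M, N, hM, hN, hMc, hNc, hMN, hu, hsp⟩ h
    haveI : CompleteSpace M := hMc.completeSpace_coe
    have h0 : (0:ℂ) ∈ cbd (spectrum ℂ (T - μ • (1 : X →L[ℂ] X))) (β + 1) := by
      rw [spectrum_sub_smul, cbd_translate, zero_add]
      exact h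
    have hun := spectrum_subset_union (T - μ • (1 : X →L[ℂ] X)) M N hMc hNc hMN
      (restr T M hM - μ • (1 : M →L[ℂ] M)) (restr T N hN - μ • (1 : N →L[ℂ] N))
      (fun x => rfl) (fun x => rfl)
    have hz : (0:ℂ) ∈ (spectrum ℂ (restr T M hM - μ • (1 : M →L[ℂ] M)))ᶜ :=
      spectrum.zero_notMem ℂ hu
    have hopen := (spectrum.isClosed (𝕜 := ℂ) (restr T M hM - μ • (1 : M →L[ℂ] M))).isOpen_compl
    have hloc := cbd_local hopen (B := spectrum ℂ (restr T N hN - μ • (1 : N →L[ℂ] N)))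
      (fun z hz => (hun hz.1).resolve_left hz.2) β
    rw [cbd_succ', mem_derivedSet, accPt_iff_nhds] at h0
    obtain ⟨y, ⟨hyU, hy⟩, hy0⟩ := h0 _ (hopen.mem_nhds hz)
    exact hy0 (hsp (hloc ⟨hy, hyU⟩))
end
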